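/- arXiv:1105.4983 — 5 statements merged into one kernel-verified Lean document; each statement's English description precedes it below -/
import Mathlib

section
/- For every M ∈ G_Δ, the matrix E(M) = D·M·D⁻¹ has all entries in ℤ, the map E is multiplicative (E(M·N) = E(M)·E(N) for M, N ∈ G_Δ), and the reduction of E(M) modulo 2 is an invertible matrix over ℤ/2ℤ (its inverse being the reduction of E(M⁻¹)). -/
open Matrix

/-- The standard symplectic matrix `J = [[0, I₂], [−I₂, 0]]` over `ℚ`. -/
def Jmat : Matrix (Fin 4) (Fin 4) ℚ :=
  !![0, 0, 1, 0; 0, 0, 0, 1; -1, 0, 0, 0; 0, -1, 0, 0]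

/-- A rational number is an integer. -/
def IsIntEntry (q : ℚ) : Prop := ∃ n : ℤ, q = n

/-- A rational number is an even integer (lies in `2ℤ`). -/
def IsEvenEntry (q : ℚ) : Prop := ∃ n : ℤ, q = 2 * n

/-- A rational number is a half-integer (`2·q ∈ ℤ`). -/
def IsHalfIntEntry (q : ℚ) : Prop := ∃ n : ℤ, 2 * q = n

/-- Membership in the paramodular group `G_Δ` for `Δ = diag(1,2)`:
`Mᵀ·J·M = J`, together with the integrality pattern: all entries in `ℤ`,
except that `M₁₄, M₂₁, M₂₃, M₂₄, M₃₄ ∈ 2ℤ` and `2·M₄₂ ∈ ℤ`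
(indices here are 0-based: `M 0 3, M 1 0, M 1 2, M 1 3, M 2 3, M 3 1`). -/
def IsParamodular (M : Matrix (Fin 4) (Fin 4) ℚ) : Prop :=
  Mᵀ * Jmat * M = Jmat ∧
  IsEvenEntry (M 0 3) ∧ IsEvenEntry (M 1 0) ∧ IsEvenEntry (M 1 2) ∧
  IsEvenEntry (M 1 3) ∧ IsEvenEntry (M 2 3) ∧ IsHalfIntEntry (M 3 1) ∧
  ∀ i j : Fin 4,
    (i, j) ∉ ({(0, 3), (1, 0), (1, 2), (1, 3), (2, 3), (3, 1)} :
      Set (Fin 4 × Fin 4)) → IsIntEntry (M i j)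

/-- The diagonal matrix `D = diag(1,1,1,2)` over `ℚ`. -/
def Dmat : Matrix (Fin 4) (Fin 4) ℚ :=
  !![1, 0, 0, 0; 0, 1, 0, 0; 0, 0, 1, 0; 0, 0, 0, 2]

/-- The conjugation `E(M) = D·M·D⁻¹`. -/
noncomputable def Emat (M : Matrix (Fin 4) (Fin 4) ℚ) : Matrix (Fin 4) (Fin 4) ℚ :=
  Dmat * M * Dmat⁻¹

/-- Reduction modulo 2 of a rational matrix with integer entries
(entrywise, via the numerator). -/
def red2 (M : Matrix (Fin 4) (Fin 4) ℚ) : Matrix (Fin 4) (Fin 4) (ZMod 2) :=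
  Matrix.of fun i j => ((M i j).num : ZMod 2)

lemma Dmat_inv : Dmat⁻¹ = !![1, 0, 0, 0; 0, 1, 0, 0; 0, 0, 1, 0; 0, 0, 0, 1/2] := by
  apply Matrix.inv_eq_right_inv
  ext i j
  fin_cases i <;> fin_cases j <;> simp [Dmat, Matrix.mul_apply, Fin.sum_univ_four]

lemma Dmat_inv_mul : Dmat⁻¹ * Dmat = 1 := by
  rw [Dmat_inv]
  ext i j
  fin_cases i <;> fin_cases j <;> simp [Dmat, Matrix.mul_apply, Fin.sum_univ_four]

lemma Dmat_mul_inv : Dmat * Dmat⁻¹ = 1 := mul_eq_one_comm.mp Dmat_inv_mul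

lemma Emat_mul (M N : Matrix (Fin 4) (Fin 4) ℚ) : Emat (M * N) = Emat M * Emat N := by
  unfold Emat
  calc Dmat * (M * N) * Dmat⁻¹ = Dmat * M * 1 * N * Dmat⁻¹ := by simp [Matrix.mul_assoc]
    _ = _ := by rw [← Dmat_inv_mul]; simp only [Matrix.mul_assoc]

lemma Emat_one : Emat 1 = 1 := by simp [Emat, Dmat_mul_inv]

lemma Emat_eq (M : Matrix (Fin 4) (Fin 4) ℚ) : Emat M =
    !![M 0 0, M 0 1, M 0 2, M 0 3 / 2; M 1 0, M 1 1, M 1 2, M 1 3 / 2;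
       M 2 0, M 2 1, M 2 2, M 2 3 / 2; 2 * M 3 0, 2 * M 3 1, 2 * M 3 2, M 3 3] := by
  unfold Emat
  rw [Dmat_inv]
  ext i j
  fin_cases i <;> fin_cases j <;> simp [Dmat, Matrix.mul_apply, Matrix.vecMul, dotProduct, Fin.sum_univ_four] <;> ring

lemma IsEvenEntry.int {q : ℚ} (h : IsEvenEntry q) : IsIntEntry q := by
  obtain ⟨n, rfl⟩ := h
  exact ⟨2 * n, by push_cast; ring⟩

lemma IsEvenEntry.half {q : ℚ} (h : IsEvenEntry q) : IsIntEntry (q / 2) := by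
  obtain ⟨n, rfl⟩ := h
  exact ⟨n, by ring⟩

lemma IsIntEntry.two {q : ℚ} (h : IsIntEntry q) : IsIntEntry (2 * q) := by
  obtain ⟨n, rfl⟩ := h
  exact ⟨2 * n, by push_cast; ring⟩

lemma IsIntEntry.neg {q : ℚ} (h : IsIntEntry q) : IsIntEntry (-q) := by
  obtain ⟨n, rfl⟩ := h
  exact ⟨-n, by push_cast; ring⟩

lemma IsEvenEntry.neg {q : ℚ} (h : IsEvenEntry q) : IsEvenEntry (-q) := by
  obtain ⟨n, rfl⟩ := h
  exact ⟨-n, by push_cast; ring⟩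

lemma Emat_int {M : Matrix (Fin 4) (Fin 4) ℚ} (h : IsParamodular M) (i j : Fin 4) :
    IsIntEntry (Emat M i j) := by
  obtain ⟨-, h03, h10, h12, h13, h23, h31, h⟩ := h
  rw [Emat_eq]
  fin_cases i <;> fin_cases j <;> simp <;>
    first
    | exact h03.half
    | exact h13.half
    | exact h23.half
    | exact h10.int
    | exact h12.int
    | exact h31
    | exact h _ _ (by simp)
    | exact (h _ _ (by simp)).two

lemma param_inv_eq {M : Matrix (Fin 4) (Fin 4) ℚ} (h : IsParamodular M) :
    (-Jmat * Mᵀ * Jmat) * M = 1 := by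
  have hJ : -Jmat * Jmat = 1 := by
    ext i j
    fin_cases i <;> fin_cases j <;> simp [Jmat, Matrix.mul_apply, Matrix.vecMul, dotProduct, Fin.sum_univ_four]
  calc (-Jmat * Mᵀ * Jmat) * M = -Jmat * (Mᵀ * Jmat * M) := by simp only [Matrix.mul_assoc]
    _ = 1 := by rw [h.1, hJ]

lemma param_inv {M : Matrix (Fin 4) (Fin 4) ℚ} (h : IsParamodular M) :
    M⁻¹ = !![M 2 2, M 3 2, -M 0 2, -M 1 2; M 2 3, M 3 3, -M 0 3, -M 1 3;
      -M 2 0, -M 3 0, M 0 0, M 1 0; -M 2 1, -M 3 1, M 0 1, M 1 1] := by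
  rw [Matrix.inv_eq_left_inv (param_inv_eq h)]
  ext i j
  fin_cases i <;> fin_cases j <;> simp [Jmat, Matrix.mul_apply, Matrix.vecMul, dotProduct, Fin.sum_univ_four]

lemma Emat_inv_int {M : Matrix (Fin 4) (Fin 4) ℚ} (h : IsParamodular M) (i j : Fin 4) :
    IsIntEntry (Emat M⁻¹ i j) := by
  rw [Emat_eq, param_inv h]
  obtain ⟨-, h03, h10, h12, h13, h23, h31, h⟩ := h
  have h31' : IsIntEntry (-(2 * M 3 1)) := IsIntEntry.neg h31
  fin_cases i <;> fin_cases j <;> simp <;>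
    first
    | exact h12.neg.half
    | exact h13.neg.half
    | exact h10.half
    | exact h23.int
    | exact h03.int.neg
    | exact h31'
    | exact h _ _ (by simp)
    | exact (h _ _ (by simp)).neg
    | exact (h _ _ (by simp)).two
    | exact (h _ _ (by simp)).two.neg

lemma red2_mul {A B : Matrix (Fin 4) (Fin 4) ℚ} (hA : ∀ i j, IsIntEntry (A i j))
    (hB : ∀ i j, IsIntEntry (B i j)) (hAB : A * B = 1) : red2 A * red2 B = 1 := by
  choose a ha using hA
  choose b hb using hB
  have h1 : (Matrix.of a) * (Matrix.of b) = 1 := by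
    ext i j
    have := congrFun (congrFun hAB i) j
    simp only [Matrix.mul_apply, ha, hb, Matrix.one_apply, Matrix.of_apply] at this ⊢
    exact_mod_cast this
  have h2 := congrArg (fun X => X.map (Int.castRingHom (ZMod 2))) h1
  simp only [Matrix.map_mul] at h2
  have hra : red2 A = (Matrix.of a).map (Int.castRingHom (ZMod 2)) := by
    ext i j; simp [red2, ha]
  have hrb : red2 B = (Matrix.of b).map (Int.castRingHom (ZMod 2)) := by
    ext i j; simp [red2, hb]
  rw [hra, hrb, h2]
  simp

/-- For `M ∈ G_Δ`: `E(M) = D·M·D⁻¹` has integer entries, `E` is multiplicative on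
`G_Δ`, and the reduction of `E(M)` mod 2 is invertible, with inverse the reduction
of `E(M⁻¹)`. -/
theorem Emat_integral_multiplicative_invertible :
    (∀ M : Matrix (Fin 4) (Fin 4) ℚ, IsParamodular M →
      ∀ i j : Fin 4, IsIntEntry (Emat M i j)) ∧
    (∀ M N : Matrix (Fin 4) (Fin 4) ℚ, IsParamodular M → IsParamodular N →
      Emat (M * N) = Emat M * Emat N) ∧
    (∀ M : Matrix (Fin 4) (Fin 4) ℚ, IsParamodular M →
      red2 (Emat M) * red2 (Emat M⁻¹) = 1 ∧
      red2 (Emat M⁻¹) * red2 (Emat M) = 1) := by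
  refine ⟨fun M h => Emat_int h, fun M N _ _ => Emat_mul M N, fun M h => ?_⟩
  have hl : M⁻¹ * M = 1 := by
    rw [Matrix.inv_eq_left_inv (param_inv_eq h)]; exact param_inv_eq h
  have hr : M * M⁻¹ = 1 := mul_eq_one_comm.mp hl
  exact ⟨red2_mul (Emat_int h) (Emat_inv_int h) (by rw [← Emat_mul, hr, Emat_one]),
    red2_mul (Emat_inv_int h) (Emat_int h) (by rw [← Emat_mul, hl, Emat_one])⟩
end

section
/- For any two nonzero vectors v, w ∈ (ℤ/2ℤ)⁴ with v₂ = v₄ = 0 and w₂ = w₄ = 0, there exists M ∈ G_Δ such that multiplying v by the reduction of E(M) modulo 2 yields w. (That is, the three nonzero 2-torsion classes in im φ₂ form a single orbit under the monodromy action of the paramodular group.) -/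
open Matrix

def embM (a b c d : ℤ) : Matrix (Fin 4) (Fin 4) ℚ :=
  !![(a : ℚ), 0, (b : ℚ), 0; 0, 1, 0, 0; (c : ℚ), 0, (d : ℚ), 0; 0, 0, 0, 1]

theorem embM_para (a b c d : ℤ) (h : a * d - b * c = 1) : IsParamodular (embM a b c d) := by
  have hq : (a : ℚ) * d - b * c = 1 := by exact_mod_cast h
  refine ⟨?_, ⟨0, by simp [embM]⟩, ⟨0, by simp [embM]⟩, ⟨0, by simp [embM]⟩,
    ⟨0, by simp [embM]⟩, ⟨0, by simp [embM]⟩, ⟨0, by simp [embM]⟩, ?_⟩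
  · ext i j
    fin_cases i <;> fin_cases j <;>
      simp [embM, Jmat, Matrix.mul_apply, Fin.sum_univ_four] <;> linarith
  · intro i j _
    refine ⟨(!![a, 0, b, 0; 0, 1, 0, 0; c, 0, d, 0; 0, 0, 0, 1] : Matrix (Fin 4) (Fin 4) ℤ) i j, ?_⟩
    fin_cases i <;> fin_cases j <;> simp [embM]

theorem embM_E (a b c d : ℤ) : Emat (embM a b c d) = embM a b c d := by
  have hc : Dmat * embM a b c d = embM a b c d * Dmat := by
    ext i j
    fin_cases i <;> fin_cases j <;>
      simp [embM, Dmat, Matrix.mul_apply, Fin.sum_univ_four]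
  have hd : IsUnit Dmat.det := by
    have : Dmat.det = 2 := by
      simp [Dmat, Matrix.det_succ_row_zero, Fin.sum_univ_succ]
    rw [this]; norm_num
  rw [Emat, hc, Matrix.mul_assoc, Matrix.mul_nonsing_inv _ hd, Matrix.mul_one]

theorem embM_act (a b c d : ℤ) (h : a * d - b * c = 1) (v w : Fin 4 → ZMod 2)
    (hv2 : v 1 = 0) (hv4 : v 3 = 0) (hw2 : w 1 = 0) (hw4 : w 3 = 0)
    (h0 : (a : ZMod 2) * v 0 + b * v 2 = w 0) (h2 : (c : ZMod 2) * v 0 + d * v 2 = w 2) :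
    ∃ M : Matrix (Fin 4) (Fin 4) ℚ,
      IsParamodular M ∧ (red2 (Emat M)).mulVec v = w := by
  refine ⟨embM a b c d, embM_para a b c d h, ?_⟩
  rw [embM_E]
  ext i
  fin_cases i <;>
    simp [embM, red2, Matrix.mulVec, dotProduct, Fin.sum_univ_four, hv2, hv4, hw2, hw4, h0, h2]

theorem exists_sl2 : ∀ x y z t : ZMod 2, ¬ (x = 0 ∧ y = 0) → ¬ (z = 0 ∧ t = 0) →
    ∃ a ∈ ([0, 1, -1] : List ℤ), ∃ b ∈ ([0, 1, -1] : List ℤ), ∃ c ∈ ([0, 1, -1] : List ℤ),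
      ∃ d ∈ ([0, 1, -1] : List ℤ), a * d - b * c = 1 ∧
      (a : ZMod 2) * x + b * y = z ∧ (c : ZMod 2) * x + d * y = t := by
  decide

/-- The three nonzero 2-torsion classes in `im φ₂` (nonzero vectors with second and
fourth coordinates zero) form a single orbit under the monodromy action of `G_Δ`. -/
theorem orbit_im_phi2 (v w : Fin 4 → ZMod 2) (hv : v ≠ 0) (hw : w ≠ 0)
    (hv2 : v 1 = 0) (hv4 : v 3 = 0) (hw2 : w 1 = 0) (hw4 : w 3 = 0) :
    ∃ M : Matrix (Fin 4) (Fin 4) ℚ,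
      IsParamodular M ∧ (red2 (Emat M)).mulVec v = w := by
  have key : ∀ u : Fin 4 → ZMod 2, u ≠ 0 → u 1 = 0 → u 3 = 0 → ¬ (u 0 = 0 ∧ u 2 = 0) := by
    rintro u hu h1 h3 ⟨h0, h2⟩
    apply hu
    ext i
    fin_cases i <;> simp [h0, h1, h2, h3]
  obtain ⟨a, -, b, -, c, -, d, -, h, h0, h2⟩ :=
    exists_sl2 (v 0) (v 2) (w 0) (w 2) (key v hv hv2 hv4) (key w hw hw2 hw4)
  exact embM_act a b c d h v w hv2 hv4 hw2 hw4 h0 h2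
end

section
/- The monodromy action of the paramodular group G_Δ on the 2-torsion points has precisely three orbits; concretely: for any two nonzero vectors v, w ∈ (ℤ/2ℤ)⁴, there exists M ∈ G_Δ with (E(M) mod 2)·v = w if and only if the conditions '(v₂, v₄) = (0,0)' and '(w₂, w₄) = (0,0)' are equivalent. Hence the orbits of the action on (ℤ/2ℤ)⁴ are exactly: the zero vector; the three nonzero vectors with second and fourth coordinates zero; and the remaining twelve vectors. -/
open Matrix

def Dinv : Matrix (Fin 4) (Fin 4) ℚ :=
  !![1, 0, 0, 0; 0, 1, 0, 0; 0, 0, 1, 0; 0, 0, 0, 1/2]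

def Kmat : Matrix (Fin 4) (Fin 4) ℤ :=
  !![0, 0, 2, 0; 0, 0, 0, 1; -2, 0, 0, 0; 0, -1, 0, 0]

lemma D_mul_Dinv : Dmat * Dinv = 1 := by
  ext i j; fin_cases i <;> fin_cases j <;> simp [Dmat, Dinv, Matrix.mul_apply, Matrix.vecMul, dotProduct, Fin.sum_univ_four]

lemma Dinv_mul_D : Dinv * Dmat = 1 := by
  ext i j; fin_cases i <;> fin_cases j <;> simp [Dmat, Dinv, Matrix.mul_apply, Matrix.vecMul, dotProduct, Fin.sum_univ_four]

lemma D_inv : Dmat⁻¹ = Dinv := Matrix.inv_eq_right_inv D_mul_Dinv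

/-- Integral matrices `E` preserving the form, with even entries in the relevant places. -/
def InS (E : Matrix (Fin 4) (Fin 4) ℤ) : Prop :=
  Eᵀ * Kmat * E = Kmat ∧ 2 ∣ E 1 0 ∧ 2 ∣ E 1 2 ∧ 2 ∣ E 3 0 ∧ 2 ∣ E 3 2

lemma InS.mul {E F : Matrix (Fin 4) (Fin 4) ℤ} (hE : InS E) (hF : InS F) : InS (E * F) := by
  obtain ⟨h, a, b, c, d⟩ := hE
  obtain ⟨h', a', b', c', d'⟩ := hF
  refine ⟨?_, ?_, ?_, ?_, ?_⟩
  · calc (E * F)ᵀ * Kmat * (E * F) = Fᵀ * (Eᵀ * Kmat * E) * F := by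
          rw [Matrix.transpose_mul]; simp only [Matrix.mul_assoc]
      _ = Kmat := by rw [h, h']
  all_goals
    rw [Matrix.mul_apply, Fin.sum_univ_four]
    refine dvd_add (dvd_add (dvd_add ?_ ?_) ?_) ?_ <;>
    first
    | exact Dvd.dvd.mul_right (by assumption) _
    | exact Dvd.dvd.mul_left (by assumption) _

lemma InS.para {E : Matrix (Fin 4) (Fin 4) ℤ} (hE : InS E) :
    IsParamodular (Dinv * E.map (Int.cast : ℤ → ℚ) * Dmat) := by
  obtain ⟨h, ⟨a, ha⟩, ⟨b, hb⟩, ⟨c, hc⟩, ⟨d, hd⟩⟩ := hE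
  have hK : Dinv * Jmat * Dinv = (1/2 : ℚ) • Kmat.map (Int.cast : ℤ → ℚ) := by
    ext i j; fin_cases i <;> fin_cases j <;>
      simp [Dinv, Jmat, Kmat, Matrix.mul_apply, Matrix.vecMul, dotProduct, Fin.sum_univ_four]
  have hK' : Dmat * ((1/2 : ℚ) • Kmat.map (Int.cast : ℤ → ℚ)) * Dmat = Jmat := by
    ext i j; fin_cases i <;> fin_cases j <;>
      simp [Dmat, Jmat, Kmat, Matrix.mul_apply, Matrix.vecMul, dotProduct, Fin.sum_univ_four]
  have hDt : Dmatᵀ = Dmat := by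
    ext i j; fin_cases i <;> fin_cases j <;> simp [Dmat]
  have hDit : Dinvᵀ = Dinv := by
    ext i j; fin_cases i <;> fin_cases j <;> simp [Dinv]
  have h2 : (E.map (Int.cast : ℤ → ℚ))ᵀ * Kmat.map (Int.cast : ℤ → ℚ) *
      E.map (Int.cast : ℤ → ℚ) = Kmat.map (Int.cast : ℤ → ℚ) := by
    have := congrArg (fun X => (Int.castRingHom ℚ).mapMatrix X) h
    simpa [map_mul, Matrix.transpose_map] using this
  refine ⟨?_, ?_, ?_, ?_, ?_, ?_, ?_, ?_⟩
  · generalize E.map (Int.cast : ℤ → ℚ) = X at h2 ⊢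
    calc (Dinv * X * Dmat)ᵀ * Jmat * (Dinv * X * Dmat)
        = Dmat * (Xᵀ * (Dinv * Jmat * Dinv) * X) * Dmat := by
          simp only [Matrix.transpose_mul, hDt, hDit, Matrix.mul_assoc]
      _ = Jmat := by
          rw [hK, Matrix.mul_smul, Matrix.smul_mul, h2, hK']
  · exact ⟨E 0 3, by simp [Dinv, Dmat, Matrix.mul_apply, Matrix.vecMul, dotProduct, Fin.sum_univ_four, mul_comm]⟩
  · exact ⟨a, by simp [Dinv, Dmat, Matrix.mul_apply, Matrix.vecMul, dotProduct, Fin.sum_univ_four, ha]⟩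
  · exact ⟨b, by simp [Dinv, Dmat, Matrix.mul_apply, Matrix.vecMul, dotProduct, Fin.sum_univ_four, hb]⟩
  · exact ⟨E 1 3, by simp [Dinv, Dmat, Matrix.mul_apply, Matrix.vecMul, dotProduct, Fin.sum_univ_four, mul_comm]⟩
  · exact ⟨E 2 3, by simp [Dinv, Dmat, Matrix.mul_apply, Matrix.vecMul, dotProduct, Fin.sum_univ_four, mul_comm]⟩
  · exact ⟨E 3 1, by simp [Dinv, Dmat, Matrix.mul_apply, Matrix.vecMul, dotProduct, Fin.sum_univ_four]⟩
  · intro i j hij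
    by_cases h30 : i = 3 ∧ j = 0
    · obtain ⟨rfl, rfl⟩ := h30
      exact ⟨c, by simp [Dinv, Dmat, Matrix.mul_apply, Matrix.vecMul, dotProduct, Fin.sum_univ_four, hc]⟩
    by_cases h32 : i = 3 ∧ j = 2
    · obtain ⟨rfl, rfl⟩ := h32
      exact ⟨d, by simp [Dinv, Dmat, Matrix.mul_apply, Matrix.vecMul, dotProduct, Fin.sum_univ_four, hd]⟩
    refine ⟨E i j, ?_⟩
    fin_cases i <;> fin_cases j <;>
      simp [Dinv, Dmat, Matrix.mul_apply, Matrix.vecMul, dotProduct, Fin.sum_univ_four] at hij h30 h32 ⊢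
    ring

lemma red_E (E : Matrix (Fin 4) (Fin 4) ℤ) :
    red2 (Emat (Dinv * E.map (Int.cast : ℤ → ℚ) * Dmat)) = E.map (Int.cast : ℤ → ZMod 2) := by
  have : Emat (Dinv * E.map (Int.cast : ℤ → ℚ) * Dmat) = E.map (Int.cast : ℤ → ℚ) := by
    unfold Emat
    rw [D_inv]
    calc _ = (Dmat * Dinv) * E.map (Int.cast : ℤ → ℚ) * (Dmat * Dinv) := by
          simp only [Matrix.mul_assoc]
      _ = _ := by rw [D_mul_Dinv]; simp
  rw [this]
  ext i j
  simp [red2]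

def OrbRel (v w : Fin 4 → ZMod 2) : Prop :=
  ∃ E : Matrix (Fin 4) (Fin 4) ℤ, InS E ∧ (E.map (Int.cast : ℤ → ZMod 2)).mulVec v = w

lemma OrbRel.trans {u v w : Fin 4 → ZMod 2} (h : OrbRel u v) (h' : OrbRel v w) : OrbRel u w := by
  obtain ⟨E, hE, rfl⟩ := h
  obtain ⟨F, hF, rfl⟩ := h'
  refine ⟨F * E, hF.mul hE, ?_⟩
  rw [Matrix.mulVec_mulVec]
  congr 1
  exact (Int.castRingHom (ZMod 2)).mapMatrix.map_mul F E

/-- elementary moves -/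
def mv (k : Fin 6) (a : ZMod 2) (v : Fin 4 → ZMod 2) : Fin 4 → ZMod 2 :=
  match k with
  | 0 => ![v 0 + a * v 2, v 1, v 2, v 3]
  | 1 => ![v 0, v 1, v 2 + a * v 0, v 3]
  | 2 => ![v 0, v 1 + a * v 3, v 2, v 3]
  | 3 => ![v 0, v 1, v 2, v 3 + a * v 1]
  | 4 => ![v 0 + a * v 1, v 1, v 2, v 3]
  | 5 => ![v 0, v 1, v 2 + a * v 1, v 3]

def gen (k : Fin 6) (a : ℤ) : Matrix (Fin 4) (Fin 4) ℤ :=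
  match k with
  | 0 => !![1, 0, a, 0; 0, 1, 0, 0; 0, 0, 1, 0; 0, 0, 0, 1]
  | 1 => !![1, 0, 0, 0; 0, 1, 0, 0; a, 0, 1, 0; 0, 0, 0, 1]
  | 2 => !![1, 0, 0, 0; 0, 1, 0, a; 0, 0, 1, 0; 0, 0, 0, 1]
  | 3 => !![1, 0, 0, 0; 0, 1, 0, 0; 0, 0, 1, 0; 0, a, 0, 1]
  | 4 => !![1, a, 0, 0; 0, 1, 0, 0; 0, 0, 1, 0; 0, 0, -2 * a, 1]
  | 5 => !![1, 0, 0, 0; 0, 1, 0, 0; 0, a, 1, 0; 2 * a, 0, 0, 1]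

lemma rel_mv (k : Fin 6) (a : ZMod 2) (v : Fin 4 → ZMod 2) : OrbRel v (mv k a v) := by
  have hS : ∀ k : Fin 6, ∀ a : ZMod 2, InS (gen k (a.val : ℤ)) := by
    unfold InS; decide
  have hv : ∀ k : Fin 6, ∀ a : ZMod 2, ∀ v : Fin 4 → ZMod 2,
      ((gen k (a.val : ℤ)).map (Int.cast : ℤ → ZMod 2)).mulVec v = mv k a v := by
    decide +kernel
  exact ⟨_, hS k a, hv k a v⟩

lemma rel_of (v w : Fin 4 → ZMod 2) (hv : v ≠ 0) (hw : w ≠ 0)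
    (h : (v 1 = 0 ∧ v 3 = 0) ↔ (w 1 = 0 ∧ w 3 = 0)) : OrbRel v w := by
  by_cases h0 : v 1 = 0 ∧ v 3 = 0
  · have h1 := h.1 h0
    have key : ∀ v : Fin 4 → ZMod 2, v ≠ 0 → v 1 = 0 → v 3 = 0 → ∃ a b : ZMod 2,
        mv 1 b (mv 0 a v) = ![1, 0, 0, 0] ∧ mv 0 a (mv 1 b ![1, 0, 0, 0]) = v := by
      decide +kernel
    obtain ⟨a, b, hab, -⟩ := key v hv h0.1 h0.2
    obtain ⟨c, d, -, hcd⟩ := key w hw h1.1 h1.2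
    have r1 := (rel_mv 0 a v).trans (rel_mv 1 b _)
    have r2 := (rel_mv 1 d ![1, 0, 0, 0]).trans (rel_mv 0 c _)
    rw [hab] at r1
    rw [hcd] at r2
    exact r1.trans r2
  · have h1 : ¬ (w 1 = 0 ∧ w 3 = 0) := fun h' => h0 (h.2 h')
    have key : ∀ v : Fin 4 → ZMod 2, ¬ (v 1 = 0 ∧ v 3 = 0) → ∃ a b c d : ZMod 2,
        mv 5 d (mv 4 c (mv 3 b (mv 2 a v))) = ![0, 1, 0, 0] ∧
        mv 2 a (mv 3 b (mv 4 c (mv 5 d ![0, 1, 0, 0]))) = v := by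
      decide +kernel
    obtain ⟨a, b, c, d, hab, -⟩ := key v h0
    obtain ⟨a', b', c', d', -, hcd⟩ := key w h1
    have r1 := (((rel_mv 2 a v).trans (rel_mv 3 b _)).trans (rel_mv 4 c _)).trans (rel_mv 5 d _)
    have r2 := (((rel_mv 5 d' ![0, 1, 0, 0]).trans (rel_mv 4 c' _)).trans
      (rel_mv 3 b' _)).trans (rel_mv 2 a' _)
    rw [hab] at r1
    rw [hcd] at r2
    exact r1.trans r2

lemma zaux : ∀ p q r s x y : ZMod 2, p * s - q * r = 1 →
    ((x = 0 ∧ y = 0) ↔ (p * x + q * y = 0 ∧ r * x + s * y = 0)) := by decide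

lemma forward (M : Matrix (Fin 4) (Fin 4) ℚ) (hM : IsParamodular M) (v : Fin 4 → ZMod 2) :
    ((v 1 = 0 ∧ v 3 = 0) ↔
      ((red2 (Emat M)).mulVec v 1 = 0 ∧ (red2 (Emat M)).mulVec v 3 = 0)) := by
  obtain ⟨hJ, ⟨a03, h03⟩, ⟨a10, h10⟩, ⟨a12, h12⟩, ⟨a13, h13⟩, ⟨a23, h23⟩, ⟨a31, h31⟩, hint⟩ := hM
  obtain ⟨a01, h01⟩ := hint 0 1 (by simp)
  obtain ⟨a21, h21⟩ := hint 2 1 (by simp)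
  obtain ⟨a11, h11⟩ := hint 1 1 (by simp)
  obtain ⟨a33, h33⟩ := hint 3 3 (by simp)
  obtain ⟨a30, h30⟩ := hint 3 0 (by simp)
  obtain ⟨a32, h32⟩ := hint 3 2 (by simp)
  have e := congrFun (congrFun hJ 1) 3
  simp [Jmat, Matrix.mul_apply, Matrix.vecMul, dotProduct, Fin.sum_univ_four] at e
  have e' : a11 * a33 - a13 * a31 + 2 * (a01 * a23 - a21 * a03) = 1 := by
    have : (a11 * a33 - a13 * a31 + 2 * (a01 * a23 - a21 * a03) : ℚ) = 1 := by
      rw [← h11, ← h33, ← h31, ← h01, ← h21]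
      rw [h03, h13, h23] at e
      linarith
    exact_mod_cast this
  have e2 : (a11 : ZMod 2) * a33 - a13 * a31 = 1 := by
    have := congrArg (Int.cast : ℤ → ZMod 2) e'
    push_cast at this
    rw [show (2 : ZMod 2) = 0 from rfl] at this
    simpa using this
  have hE : ∀ (i j : Fin 4) (n : ℤ), Emat M i j = n → red2 (Emat M) i j = n := by
    intro i j n h
    simp [red2, h]
  have E10 := hE 1 0 (2 * a10) (by
    rw [Emat, D_inv]; simp [Dinv, Dmat, Matrix.mul_apply, Matrix.vecMul, dotProduct, Fin.sum_univ_four, h10])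
  have E11 := hE 1 1 a11 (by
    rw [Emat, D_inv]; simp [Dinv, Dmat, Matrix.mul_apply, Matrix.vecMul, dotProduct, Fin.sum_univ_four, h11])
  have E12 := hE 1 2 (2 * a12) (by
    rw [Emat, D_inv]; simp [Dinv, Dmat, Matrix.mul_apply, Matrix.vecMul, dotProduct, Fin.sum_univ_four, h12])
  have E13 := hE 1 3 a13 (by
    rw [Emat, D_inv]; simp [Dinv, Dmat, Matrix.mul_apply, Matrix.vecMul, dotProduct, Fin.sum_univ_four, h13]; try ring)
  have E30 := hE 3 0 (2 * a30) (by
    rw [Emat, D_inv]; simp [Dinv, Dmat, Matrix.mul_apply, Matrix.vecMul, dotProduct, Fin.sum_univ_four, h30])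
  have E31 := hE 3 1 a31 (by
    rw [Emat, D_inv]; simp [Dinv, Dmat, Matrix.mul_apply, Matrix.vecMul, dotProduct, Fin.sum_univ_four, h31])
  have E32 := hE 3 2 (2 * a32) (by
    rw [Emat, D_inv]; simp [Dinv, Dmat, Matrix.mul_apply, Matrix.vecMul, dotProduct, Fin.sum_univ_four, h32])
  have E33 := hE 3 3 a33 (by
    rw [Emat, D_inv]; simp [Dinv, Dmat, Matrix.mul_apply, Matrix.vecMul, dotProduct, Fin.sum_univ_four, h33]; try ring)
  have z := zaux a11 a13 a31 a33 (v 1) (v 3) e2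
  simp only [Matrix.mulVec, dotProduct, Fin.sum_univ_four, E10, E11, E12, E13, E30, E31, E32, E33]
  push_cast
  rw [show (2 : ZMod 2) = 0 from rfl]
  simpa using z

/-- The monodromy action of `G_Δ` on the 2-torsion points has precisely three orbits:
for nonzero `v, w ∈ (ℤ/2ℤ)⁴`, some `M ∈ G_Δ` maps `v` to `w` iff the conditions
`(v₂, v₄) = (0,0)` and `(w₂, w₄) = (0,0)` are equivalent. -/
theorem three_orbits (v w : Fin 4 → ZMod 2) (hv : v ≠ 0) (hw : w ≠ 0) :
    (∃ M : Matrix (Fin 4) (Fin 4) ℚ,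
        IsParamodular M ∧ (red2 (Emat M)).mulVec v = w) ↔
      ((v 1 = 0 ∧ v 3 = 0) ↔ (w 1 = 0 ∧ w 3 = 0)) := by
  constructor
  · rintro ⟨M, hM, rfl⟩
    exact forward M hM v
  · intro h
    obtain ⟨E, hE, hEv⟩ := rel_of v w hv hw h
    exact ⟨_, hE.para, by rw [red_E]; exact hEv⟩
end

section
/- Let ψ₁,...,ψ₁₂ be the twelve vectors of (ℤ/2ℤ)⁴ listed in the context, and for integers b₁₁, b₁₂, b₂₂ let M_b = [[1,0,b₁₁,2b₁₂],[0,1,2b₁₂,2b₂₂],[0,0,1,0],[0,0,0,1]]. Then the permutation of {ψ₁,...,ψ₁₂} induced by multiplication by the reduction of E(M_b) modulo 2 is: (i) if b₁₁ is odd and b₁₂, b₂₂ are even, the permutation (ψ₂ ψ₈)(ψ₅ ψ₁₁)(ψ₆ ψ₁₂), fixing the other six vectors ψ₁, ψ₃, ψ₄, ψ₇, ψ₉, ψ₁₀; (ii) if b₁₂ is odd and b₁₁, b₂₂ are even, the permutation (ψ₁ ψ₇)(ψ₂ ψ₈)(ψ₄ ψ₁₀)(ψ₆ ψ₁₂), fixing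 ψ₃, ψ₅, ψ₉, ψ₁₁, ψ₁₂... fixing the remaining four vectors; (iii) if b₂₂ is odd and b₁₁, b₁₂ are even, the permutation (ψ₁ ψ₄)(ψ₂ ψ₆)(ψ₇ ψ₁₀)(ψ₈ ψ₁₂), fixing the remaining four vectors. -/
open Matrix

/-- The twelve vectors ψ₁,…,ψ₁₂ of `(ℤ/2ℤ)⁴` (those with `(v₂,v₄) ≠ (0,0)`),
indexed by `Fin 12` (ψ_{k+1} = psi k). -/
def psi : Fin 12 → (Fin 4 → ZMod 2) :=
  ![![0, 0, 0, 1], ![0, 0, 1, 1], ![0, 1, 0, 0], ![0, 1, 0, 1],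
    ![0, 1, 1, 0], ![0, 1, 1, 1], ![1, 0, 0, 1], ![1, 0, 1, 1],
    ![1, 1, 0, 0], ![1, 1, 0, 1], ![1, 1, 1, 0], ![1, 1, 1, 1]]

/-- The matrix `M_b`. -/
def Mb (b11 b12 b22 : ℤ) : Matrix (Fin 4) (Fin 4) ℚ :=
  !![1, 0, (b11 : ℚ), 2 * (b12 : ℚ);
     0, 1, 2 * (b12 : ℚ), 2 * (b22 : ℚ);
     0, 0, 1, 0;
     0, 0, 0, 1]

/-- The permutation (ψ₂ ψ₈)(ψ₅ ψ₁₁)(ψ₆ ψ₁₂), in 0-based indices. -/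
def permB1 : Equiv.Perm (Fin 12) := Equiv.swap 1 7 * Equiv.swap 4 10 * Equiv.swap 5 11

/-- The permutation (ψ₁ ψ₇)(ψ₂ ψ₈)(ψ₄ ψ₁₀)(ψ₆ ψ₁₂), in 0-based indices. -/
def permB2 : Equiv.Perm (Fin 12) :=
  Equiv.swap 0 6 * Equiv.swap 1 7 * Equiv.swap 3 9 * Equiv.swap 5 11

/-- The permutation (ψ₁ ψ₄)(ψ₂ ψ₆)(ψ₇ ψ₁₀)(ψ₈ ψ₁₂), in 0-based indices. -/
def permB3 : Equiv.Perm (Fin 12) :=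
  Equiv.swap 0 3 * Equiv.swap 1 5 * Equiv.swap 6 9 * Equiv.swap 7 11

theorem Dmat_inv_aux : Dmat⁻¹ = !![1, 0, 0, 0; 0, 1, 0, 0; 0, 0, 1, 0; 0, 0, 0, (1/2 : ℚ)] := by
  apply Matrix.inv_eq_right_inv
  ext i j
  fin_cases i <;> fin_cases j <;> simp [Dmat, Matrix.mul_apply, Fin.sum_univ_four]

theorem Emat_Mb_aux (b11 b12 b22 : ℤ) : Emat (Mb b11 b12 b22) =
    (!![1, 0, b11, b12; 0, 1, 2 * b12, b22; 0, 0, 1, 0; 0, 0, 0, 1] :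
      Matrix (Fin 4) (Fin 4) ℤ).map (fun n : ℤ => (n : ℚ)) := by
  rw [Emat, Dmat_inv_aux]
  ext i j
  fin_cases i <;> fin_cases j <;>
    simp [Dmat, Mb, Matrix.mul_apply, Fin.sum_univ_four] <;> ring

theorem red2_aux (b11 b12 b22 : ℤ) : red2 (Emat (Mb b11 b12 b22)) =
    !![1, 0, (b11 : ZMod 2), (b12 : ZMod 2); 0, 1, 0, (b22 : ZMod 2); 0, 0, 1, 0; 0, 0, 0, 1] := by
  have h2 : (2 : ZMod 2) = 0 := rfl
  rw [Emat_Mb_aux]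
  ext i j
  simp only [red2, Matrix.of_apply, Matrix.map_apply, Rat.num_intCast]
  fin_cases i <;> fin_cases j <;> simp [h2]

theorem odd_aux {n : ℤ} (h : Odd n) : (n : ZMod 2) = 1 := by
  obtain ⟨k, rfl⟩ := h
  have h2 : (2 : ZMod 2) = 0 := rfl
  simp [h2]

theorem even_aux {n : ℤ} (h : Even n) : (n : ZMod 2) = 0 := by
  obtain ⟨k, rfl⟩ := h
  have h2 : (2 : ZMod 2) = 0 := rfl
  simp [← two_mul, h2]

/-- The permutation of {ψ₁,…,ψ₁₂} induced by `E(M_b) mod 2` in the three parity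
cases of `(b₁₁, b₁₂, b₂₂)`. -/
theorem Mb_monodromy_permutation (b11 b12 b22 : ℤ) :
    (Odd b11 → Even b12 → Even b22 → ∀ k : Fin 12,
      (red2 (Emat (Mb b11 b12 b22))).mulVec (psi k) = psi (permB1 k)) ∧
    (Odd b12 → Even b11 → Even b22 → ∀ k : Fin 12,
      (red2 (Emat (Mb b11 b12 b22))).mulVec (psi k) = psi (permB2 k)) ∧
    (Odd b22 → Even b11 → Even b12 → ∀ k : Fin 12,
      (red2 (Emat (Mb b11 b12 b22))).mulVec (psi k) = psi (permB3 k)) := by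
  rw [red2_aux]
  refine ⟨fun h1 h2 h3 => ?_, fun h1 h2 h3 => ?_, fun h1 h2 h3 => ?_⟩ <;>
    rw [odd_aux h1, even_aux h2, even_aux h3] <;> decide +kernel
end

section
/- The subgroup of GL₄(ℤ/2ℤ) generated by the mod-2 reductions E(M) of the matrices M_b (for all parities of b₁₁, b₁₂, b₂₂), M_d (for all admissible d with d₁₁d₂₂ − 2d₁₂d₂₁ = 1), and M_{1,2} acts transitively on the set of twelve vectors v ∈ (ℤ/2ℤ)⁴ with (v₂, v₄) ≠ (0,0): concretely, the group generated by the three linear maps v ↦ (v₁+v₃, v₂, v₃, v₄), v ↦ (v₁+v₄, v₂, v₃, v₄), v ↦ (v₁, v₂+v₄, v₃, v₄), v ↦ (v₁+v₂, v₂, v₃, v₄), v ↦ (v₁, v₂, v₃+v₄, v₄), v ↦ (v₃, v₄, v₁, v₂) of (ℤ/2ℤ)⁴ acts transitively on this twelve-element set. -/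
/-- The linear involution `v ↦ (v₁+v₃, v₂, v₃, v₄)` of `(ℤ/2ℤ)⁴`
(the mod-2 reduction of `E(M_b)` with `b₁₁` odd, `b₁₂, b₂₂` even). -/
def e1 : Equiv.Perm (Fin 4 → ZMod 2) :=
  Function.Involutive.toPerm (fun v => ![v 0 + v 2, v 1, v 2, v 3]) (by intro v; revert v; decide)

/-- The linear involution `v ↦ (v₁+v₄, v₂, v₃, v₄)` of `(ℤ/2ℤ)⁴`
(the mod-2 reduction of `E(M_b)` with `b₁₂` odd, `b₁₁, b₂₂` even). -/
def e2 : Equiv.Perm (Fin 4 → ZMod 2) :=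
  Function.Involutive.toPerm (fun v => ![v 0 + v 3, v 1, v 2, v 3]) (by intro v; revert v; decide)

/-- The linear involution `v ↦ (v₁, v₂+v₄, v₃, v₄)` of `(ℤ/2ℤ)⁴`
(the mod-2 reduction of `E(M_b)` with `b₂₂` odd, `b₁₁, b₁₂` even). -/
def e3 : Equiv.Perm (Fin 4 → ZMod 2) :=
  Function.Involutive.toPerm (fun v => ![v 0, v 1 + v 3, v 2, v 3]) (by intro v; revert v; decide)

/-- The linear involution `v ↦ (v₁+v₂, v₂, v₃, v₄)` of `(ℤ/2ℤ)⁴`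
(the mod-2 reduction of `E(M_d)` with `d₂₁` odd, `d₁₂` even). -/
def e4 : Equiv.Perm (Fin 4 → ZMod 2) :=
  Function.Involutive.toPerm (fun v => ![v 0 + v 1, v 1, v 2, v 3]) (by intro v; revert v; decide)

/-- The linear involution `v ↦ (v₁, v₂, v₃+v₄, v₄)` of `(ℤ/2ℤ)⁴`
(the mod-2 reduction of `E(M_d)` with `d₁₂` odd, `d₂₁` even). -/
def e5 : Equiv.Perm (Fin 4 → ZMod 2) :=
  Function.Involutive.toPerm (fun v => ![v 0, v 1, v 2 + v 3, v 3]) (by intro v; revert v; decide)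

/-- The linear involution `v ↦ (v₃, v₄, v₁, v₂)` of `(ℤ/2ℤ)⁴`
(the mod-2 reduction of `E(M_{1,2})`). -/
def e6 : Equiv.Perm (Fin 4 → ZMod 2) :=
  Function.Involutive.toPerm (fun v => ![v 2, v 3, v 0, v 1]) (by intro v; revert v; decide)

theorem to_base_aux : ∀ v : Fin 4 → ZMod 2, ¬(v 1 = 0 ∧ v 3 = 0) →
    ∃ a b c d : Fin 2, (e2 ^ a.val) ((e5 ^ b.val) ((e3 ^ c.val) ((e6 ^ d.val) v))) = ![0, 0, 0, 1] := by
  decide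

theorem to_base (v : Fin 4 → ZMod 2) (hv : ¬(v 1 = 0 ∧ v 3 = 0)) :
    ∃ τ ∈ Subgroup.closure
      ({e1, e2, e3, e4, e5, e6} : Set (Equiv.Perm (Fin 4 → ZMod 2))),
      τ v = ![0, 0, 0, 1] := by
  obtain ⟨a, b, c, d, h⟩ := to_base_aux v hv
  refine ⟨e2 ^ a.val * (e5 ^ b.val * (e3 ^ c.val * e6 ^ d.val)), ?_, h⟩
  refine mul_mem (pow_mem (Subgroup.subset_closure ?_) _) (mul_mem (pow_mem (Subgroup.subset_closure ?_) _)
    (mul_mem (pow_mem (Subgroup.subset_closure ?_) _) (pow_mem (Subgroup.subset_closure ?_) _))) <;> simp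

/-- The group generated by the six linear maps acts transitively on the
twelve-element set `{v ∈ (ℤ/2ℤ)⁴ : (v₂, v₄) ≠ (0,0)}` (0-based: indices 1 and 3). -/
theorem generated_group_transitive_outside_im_phi2
    (v w : Fin 4 → ZMod 2)
    (hv : ¬(v 1 = 0 ∧ v 3 = 0)) (hw : ¬(w 1 = 0 ∧ w 3 = 0)) :
    ∃ τ ∈ Subgroup.closure
      ({e1, e2, e3, e4, e5, e6} : Set (Equiv.Perm (Fin 4 → ZMod 2))),
      τ v = w := by
  obtain ⟨s, hs, h1⟩ := to_base v hv
  obtain ⟨t, ht, h2⟩ := to_base w hw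
  refine ⟨t⁻¹ * s, mul_mem (inv_mem ht) hs, ?_⟩
  rw [Equiv.Perm.mul_apply, h1, ← h2]
  exact t.symm_apply_apply w
end
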